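/- arXiv:1604.01302 — 2 statements merged into one kernel-verified Lean document; each statement's English description precedes it below -/
import Mathlib

section
/- Let f ∈ L¹(T^n) ∩ L²(T^n) have nonnegative Fourier coefficients and let g be a continuous function on T^n with nonnegative Fourier coefficients. Then ∫_{T^n} |f|² g dx ≥ ĝ₀ ∫_{T^n} |f|² dx. -/
open MeasureTheory Complex Set
open scoped ENNReal NNReal ComplexOrder

noncomputable def eC (t : ℝ) : ℂ := Complex.exp (2 * Real.pi * Complex.I * t)

noncomputable def box (n : ℕ) : Set (Fin n → ℝ) :=
  Set.Icc (fun _ => -(1/2 : ℝ)) (fun _ => (1/2 : ℝ))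

def IsPeriodic {n : ℕ} (f : (Fin n → ℝ) → ℂ) : Prop :=
  ∀ (x : Fin n → ℝ) (ν : Fin n → ℤ), f (x + fun i => (ν i : ℝ)) = f x

/-- The ν-th Fourier coefficient of a 1-periodic function on ℝⁿ (the n-torus),
computed over the fundamental domain `[-1/2,1/2]ⁿ`. -/
noncomputable def fourierCoeffT {n : ℕ} (f : (Fin n → ℝ) → ℂ) (ν : Fin n → ℤ) : ℂ :=
  ∫ x in box n, f x * eC (-(∑ i, (ν i : ℝ) * x i))

/-- The Fourier transform on ℝⁿ. -/
noncomputable def fourierR {n : ℕ} (f : (Fin n → ℝ) → ℂ) (ξ : Fin n → ℝ) : ℂ :=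
  ∫ x, f x * eC (-(∑ i, ξ i * x i))

/-!
For `f, g ∈ L²(𝕋ᵈ)`, Parseval applied to `conj f · e_{m + n}` and `g` writes the `(m + n)`-th
coefficient of `f g` as the convolution `∑ₖ f̂_{m + n - k} ĝₖ`. When all coefficients are
nonnegative, this is at least its single term `f̂ₘ ĝₙ`. In particular `ĝ₀ f̂_ν ≤ (f g)^_ν`, and
Parseval for the pairs `f, f` and `f, f g` gives
`ĝ₀ ∫ |f|² = ∑ f̂_ν ĝ₀ f̂_ν ≤ ∑ f̂_ν (f g)^_ν = ∫ |f|² g`.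
-/

open UnitAddTorus
open scoped ComplexConjugate

theorem memLp_restrict_of_continuousOn_of_isCompact {X E : Type*} [TopologicalSpace X]
    [MeasurableSpace X] [OpensMeasurableSpace X] [T2Space X] [NormedAddCommGroup E]
    {μ : Measure X} [IsFiniteMeasureOnCompacts μ] {K : Set X} {u : X → E}
    (hK : IsCompact K) (hu : ContinuousOn u K) (p : ℝ≥0∞) : MemLp u p (μ.restrict K) := by
  have : IsFiniteMeasure (μ.restrict K) := isFiniteMeasure_restrict.2 hK.measure_ne_top
  obtain ⟨C, hC⟩ := hK.exists_bound_of_continuousOn hu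
  exact .of_bound (hu.aestronglyMeasurable_of_isCompact hK hK.measurableSet) C
    ((ae_restrict_mem hK.measurableSet).mono hC)

section Torus

/-- The normalized Haar measure on the circle. Mathlib states its Fourier theory on `UnitAddTorus`
for this measure but keeps the instance local to the defining file. -/
noncomputable local instance measureSpaceUnitAddCircle : MeasureSpace UnitAddCircle :=
  ⟨AddCircle.haarAddCircle⟩

variable {d : Type*} [Fintype d] {f g : UnitAddTorus d → ℂ}

theorem mFourierCoeff_congr_ae {E : Type*} [NormedAddCommGroup E] [NormedSpace ℂ E]
    {u v : UnitAddTorus d → E} (h : u =ᵐ[volume] v) : mFourierCoeff u = mFourierCoeff v :=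
  funext fun _ ↦ integral_congr_ae (ae_eq_rfl.smul h)

theorem hasSum_conj_mFourierCoeff_mul (hf : MemLp f 2 volume) (hg : MemLp g 2 volume) :
    HasSum (fun n ↦ conj (mFourierCoeff f n) * mFourierCoeff g n) (∫ t, conj (f t) * g t) := by
  have hinner : ∫ t, conj (hf.toLp f t) * hg.toLp g t = ∫ t, conj (f t) * g t := by
    apply integral_congr_ae
    filter_upwards [hf.coeFn_toLp, hg.coeFn_toLp] with t hft hgt
    rw [hft, hgt]
  simpa only [mFourierCoeff_congr_ae hf.coeFn_toLp, mFourierCoeff_congr_ae hg.coeFn_toLp, hinner]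
    using hasSum_prod_mFourierCoeff (hf.toLp f) (hg.toLp g)

theorem conj_mFourierCoeff (f : UnitAddTorus d → ℂ) (n : d → ℤ) :
    conj (mFourierCoeff f n) = mFourierCoeff (fun t ↦ conj (f t)) (-n) := by
  simp only [mFourierCoeff, ← integral_conj, smul_eq_mul, map_mul, ← mFourier_neg]

theorem mFourierCoeff_mFourier_mul (f : UnitAddTorus d → ℂ) (m n : d → ℤ) :
    mFourierCoeff (fun t ↦ mFourier m t * f t) n = mFourierCoeff f (n - m) := by
  simp only [mFourierCoeff, smul_eq_mul, ← mul_assoc, ← mFourier_add, neg_sub, neg_add_eq_sub]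

theorem memLp_mFourier_mul {p : ℝ≥0∞} (hf : MemLp f p volume) (n : d → ℤ) :
    MemLp (fun t ↦ mFourier n t * f t) p volume := by
  refine hf.of_le ((mFourier n).continuous.aestronglyMeasurable.mul hf.1) (.of_forall fun t ↦ ?_)
  grw [norm_mul, (mFourier n).norm_coe_le_norm t, mFourier_norm, one_mul]

theorem hasSum_mFourierCoeff_mul (hf : MemLp f 2 volume) (hg : MemLp g 2 volume) (n : d → ℤ) :
    HasSum (fun k ↦ mFourierCoeff f (n - k) * mFourierCoeff g k) (mFourierCoeff (f * g) n) := by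
  have hparseval := hasSum_conj_mFourierCoeff_mul (memLp_mFourier_mul hf.star n) hg
  convert hparseval using 1
  · ext k
    rw [mFourierCoeff_mFourier_mul, conj_mFourierCoeff, neg_sub]
    simp
  · refine integral_congr_ae (.of_forall fun t ↦ ?_)
    simp [mFourier_neg, mul_assoc]

theorem mFourierCoeff_mul_le_mFourierCoeff_add (hf : MemLp f 2 volume) (hg : MemLp g 2 volume)
    (hf₀ : ∀ k, 0 ≤ mFourierCoeff f k) (hg₀ : ∀ k, 0 ≤ mFourierCoeff g k) (m n : d → ℤ) :
    mFourierCoeff f m * mFourierCoeff g n ≤ mFourierCoeff (f * g) (m + n) := by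
  simpa only [add_sub_cancel_right] using
    le_hasSum (hasSum_mFourierCoeff_mul hf hg (m + n)) n fun k _ ↦ mul_nonneg (hf₀ _) (hg₀ k)

theorem mFourierCoeff_zero_mul_integral_sq_le (hf : MemLp f 2 volume) (hg : MemLp g 2 volume)
    (hfg : MemLp (f * g) 2 volume)
    (hf₀ : ∀ k, 0 ≤ mFourierCoeff f k) (hg₀ : ∀ k, 0 ≤ mFourierCoeff g k) :
    mFourierCoeff g 0 * ∫ t, (‖f t‖ : ℂ) ^ 2 ≤ ∫ t, (‖f t‖ : ℂ) ^ 2 * g t := by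
  have hterm (k : d → ℤ) : mFourierCoeff g 0 * (conj (mFourierCoeff f k) * mFourierCoeff f k) ≤
      conj (mFourierCoeff f k) * mFourierCoeff (f * g) k := by
    have hcoeff : mFourierCoeff f k * mFourierCoeff g 0 ≤ mFourierCoeff (f * g) k := by
      simpa only [add_zero] using mFourierCoeff_mul_le_mFourierCoeff_add hf hg hf₀ hg₀ k 0
    rw [mul_left_comm, mul_comm (mFourierCoeff g 0)]
    exact mul_le_mul_of_nonneg_left hcoeff (star_nonneg_iff.2 (hf₀ k))
  simpa only [Pi.mul_apply, ← mul_assoc, conj_mul'] using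
    hasSum_le hterm ((hasSum_conj_mFourierCoeff_mul hf hf).mul_left _)
      (hasSum_conj_mFourierCoeff_mul hf hfg)

variable {n : ℕ}

/-- The representative in `(-1/2, 1/2]ⁿ` of a point of the torus; composing with it turns a function
on `box n` into a function on the torus, without any periodicity assumption. -/
noncomputable def boxRep (t : UnitAddTorus (Fin n)) : Fin n → ℝ :=
  measurableEquivPiIoc (fun _ ↦ -(1 / 2 : ℝ)) t

theorem coe_boxRep (t : UnitAddTorus (Fin n)) (i : Fin n) : (boxRep t i : UnitAddCircle) = t i :=
  congrFun ((measurableEquivPiIoc fun _ ↦ -(1 / 2 : ℝ)).symm_apply_apply t) i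

theorem measurableSet_forall_mem_Ioc {ι : Type*} [Countable ι] (a b : ι → ℝ) :
    MeasurableSet {x : ι → ℝ | ∀ i, x i ∈ Ioc (a i) (b i)} :=
  .univ_pi' fun _ ↦ measurableSet_Ioc

theorem measurableEmbedding_boxRep : MeasurableEmbedding (boxRep (n := n)) :=
  (MeasurableEmbedding.subtype_coe (measurableSet_forall_mem_Ioc _ _)).comp
    (measurableEquivPiIoc _).measurableEmbedding

theorem forall_mem_Ioc_ae_eq_box :
    {x : Fin n → ℝ | ∀ i, x i ∈ Ioc (-(1 / 2)) (-(1 / 2) + 1)} =ᵐ[volume] box n := by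
  have hpi : {x : Fin n → ℝ | ∀ i, x i ∈ Ioc (-(1 / 2)) (-(1 / 2) + 1)} =
      univ.pi fun _ ↦ Ioc (-(1 / 2)) (1 / 2) := by
    ext x
    norm_num [mem_pi]
  rw [hpi]
  exact Measure.univ_pi_Ioc_ae_eq_Icc

theorem measurePreserving_boxRep :
    MeasurePreserving (boxRep (n := n)) volume (volume.restrict (box n)) := by
  rw [← Measure.restrict_congr_set forall_mem_Ioc_ae_eq_box]
  have hval := measurableSet_forall_mem_Ioc (fun _ : Fin n ↦ -(1 / 2 : ℝ)) fun _ ↦ -(1 / 2) + 1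
  exact MeasurePreserving.comp ⟨measurable_subtype_coe, map_comap_subtype_coe hval volume⟩
    (measurePreserving_equivPiIoc _)

theorem integral_comp_boxRep {E : Type*} [NormedAddCommGroup E] [NormedSpace ℝ E]
    (u : (Fin n → ℝ) → E) : ∫ t, u (boxRep t) = ∫ x in box n, u x :=
  measurePreserving_boxRep.integral_comp measurableEmbedding_boxRep u

theorem mFourier_coe_eq_eC (ν : d → ℤ) (x : d → ℝ) :
    mFourier ν (fun i ↦ (x i : UnitAddCircle)) = eC (∑ i, (ν i : ℝ) * x i) := by
  simp only [mFourier, ContinuousMap.coe_mk, fourier_coe_apply, eC, ← Complex.exp_sum]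
  push_cast
  simp only [Finset.mul_sum, div_one, mul_assoc]

theorem mFourierCoeff_comp_boxRep (u : (Fin n → ℝ) → ℂ) (ν : Fin n → ℤ) :
    mFourierCoeff (u ∘ boxRep) ν = fourierCoeffT u ν := by
  rw [fourierCoeffT, ← integral_comp_boxRep]
  refine integral_congr_ae (.of_forall fun t ↦ ?_)
  have ht : t = fun i ↦ (boxRep t i : UnitAddCircle) := (funext (coe_boxRep t)).symm
  have hchar : mFourier (-ν) t = eC (-∑ i, (ν i : ℝ) * boxRep t i) := by
    conv_lhs => rw [ht, mFourier_coe_eq_eC]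
    simp
  simp only [hchar, Function.comp_apply, smul_eq_mul, mul_comm]

theorem integral_sq_mul_ge_general (n : ℕ) (f g : (Fin n → ℝ) → ℂ)
    (hf2 : MemLp f 2 (volume.restrict (box n))) (hg2 : MemLp g 2 (volume.restrict (box n)))
    (hfg2 : MemLp (f * g) 2 (volume.restrict (box n)))
    (hf : ∀ ν, 0 ≤ fourierCoeffT f ν) (hg : ∀ ν, 0 ≤ fourierCoeffT g ν) :
    fourierCoeffT g 0 * ∫ x in box n, ((‖f x‖ : ℂ)) ^ 2
      ≤ ∫ x in box n, ((‖f x‖ : ℂ)) ^ 2 * g x := by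
  simp only [← mFourierCoeff_comp_boxRep] at hf hg ⊢
  simp only [← integral_comp_boxRep]
  exact mFourierCoeff_zero_mul_integral_sq_le
    (hf2.comp_measurePreserving measurePreserving_boxRep)
    (hg2.comp_measurePreserving measurePreserving_boxRep)
    (hfg2.comp_measurePreserving measurePreserving_boxRep) hf hg

end Torus

/-- For `f ∈ L¹ ∩ L²(𝕋ⁿ)` with nonnegative Fourier coefficients and `g` continuous
periodic with nonnegative Fourier coefficients, `∫ |f|² g ≥ ĝ₀ ∫ |f|²`. -/
theorem integral_sq_mul_ge (n : ℕ) (f g : (Fin n → ℝ) → ℂ)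
    (hfp : IsPeriodic f) (hfi : IntegrableOn f (box n))
    (hf2 : IntegrableOn (fun x => ‖f x‖ ^ 2) (box n))
    (hf : ∀ ν, 0 ≤ fourierCoeffT f ν)
    (hgc : Continuous g) (hgp : IsPeriodic g)
    (hg : ∀ ν, 0 ≤ fourierCoeffT g ν) :
    fourierCoeffT g 0 * ∫ x in box n, ((‖f x‖ : ℂ)) ^ 2
      ≤ ∫ x in box n, ((‖f x‖ : ℂ)) ^ 2 * g x := by
  have hfL2 := (memLp_two_iff_integrable_sq_norm hfi.1).2 hf2
  have hgLp := memLp_restrict_of_continuousOn_of_isCompact (μ := volume)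
    (isCompact_Icc : IsCompact (box n)) hgc.continuousOn
  exact integral_sq_mul_ge_general n f g hfL2 (hgLp 2) ((hgLp ⊤).mul hfL2) hf hg
end

section
/- Wiener–Delsarte bound: for D ⊂ T^n an origin-symmetric convex body, W_n(D) ≤ |D| · A_{R^n}(D). -/
open MeasureTheory Complex Set
open scoped ENNReal NNReal ComplexOrder Pointwise

/-- Wiener's sharp constant `W_n(D)`: the smallest constant `C` such that
`∫_{𝕋ⁿ}|f|² ≤ C |D|⁻¹ ∫_D |f|²` for every periodic integrable `f` with
nonnegative Fourier coefficients. -/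
noncomputable def Wconst (n : ℕ) (D : Set (Fin n → ℝ)) : ℝ :=
  sInf {C : ℝ | ∀ f : (Fin n → ℝ) → ℂ, IsPeriodic f → IntegrableOn f (box n) →
    (∀ ν, 0 ≤ fourierCoeffT f ν) →
    ∫⁻ x in box n, (‖f x‖₊ : ℝ≥0∞) ^ 2 ≤
      ENNReal.ofReal C * (volume D)⁻¹ * ∫⁻ x in D, (‖f x‖₊ : ℝ≥0∞) ^ 2}

/-- Admissibility for the Delsarte (linear programming) problem on `D ⊆ ℝⁿ`:
`h ∈ L¹`, `ĥ ≥ 0` everywhere, `h ≤ 0` outside `D`, `ĥ(0) = 1`. -/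
def AdmDel {n : ℕ} (D : Set (Fin n → ℝ)) (h : (Fin n → ℝ) → ℂ) : Prop :=
  Continuous h ∧ Integrable h ∧ (∀ ξ, 0 ≤ fourierR h ξ) ∧
    (∀ x, x ∉ D → h x ≤ 0) ∧ fourierR h 0 = 1

/-- The Delsarte constant `A_{ℝⁿ}(D) = inf h(0)` over admissible `h`. -/
noncomputable def ADel (n : ℕ) (D : Set (Fin n → ℝ)) : ℝ :=
  sInf {a : ℝ | ∃ h, AdmDel D h ∧ a = (h 0).re}

/-!
For an admissible `h` and a trigonometric sum `G` with nonnegative coefficients, `|G|²` again has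
nonnegative coefficients, so integrating it against `h` term by term gives
`∫_{𝕋ⁿ} |G|² ≤ ∫_{ℝⁿ} h |G|²`: the frequency `ν` is weighted by `ĥ(-ν) ≥ 0`, and `ĥ(0) = 1`. This
is the Delsarte argument with the Poisson summation unfolded, so that `h` is never periodized.
As `h ≤ 0` off `D` and `|h| ≤ h(0)`, the right-hand side is at most `h(0) ∫_D |G|²`.

A general `f` is first mollified by a self-convolved bump, which keeps the Fourier coefficients
nonnegative and makes them summable. Mollification enlarges `D`; the loss is absorbed by replacing
`D` with `s • D` and `h` with its dilation, and Fatou's lemma lets `s → 1`.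
-/

lemma eC_eq_fourierChar (t : ℝ) : eC t = Real.fourierChar t := by
  rw [eC, Real.fourierChar_apply]
  congr 1
  push_cast
  ring

lemma eC_add (s t : ℝ) : eC (s + t) = eC s * eC t := by
  rw [eC, eC, eC, ← exp_add, ofReal_add, mul_add]

lemma eC_sum {κ : Type*} (s : Finset κ) (g : κ → ℝ) : eC (∑ i ∈ s, g i) = ∏ i ∈ s, eC (g i) := by
  simp only [eC, ofReal_sum, Finset.mul_sum, Complex.exp_sum]

section PositiveDefinite

open Filter Topology
open scoped FourierTransform RealInnerProductSpace

variable {V : Type*} [NormedAddCommGroup V] [InnerProductSpace ℝ V]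

lemma norm_cexp_gaussian (c : ℝ) (v w : V) :
    ‖cexp (-(c : ℂ)⁻¹ * ‖w‖ ^ 2 + 2 * Real.pi * I * ⟪v, w⟫)‖ = Real.exp (-c⁻¹ * ‖w‖ ^ 2) := by
  have hsplit : -(c : ℂ)⁻¹ * ‖w‖ ^ 2 + 2 * Real.pi * I * ⟪v, w⟫ =
      (-c⁻¹ * ‖w‖ ^ 2 : ℝ) + (2 * Real.pi * ⟪v, w⟫ : ℝ) * I := by
    push_cast
    ring
  rw [hsplit, norm_exp, add_re, re_ofReal_mul, I_re, mul_zero, add_zero, ofReal_re]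

variable [FiniteDimensional ℝ V] [MeasurableSpace V] [BorelSpace V]

lemma tendsto_integral_cexp_smul_fourier {E : Type*} [NormedAddCommGroup E] [NormedSpace ℂ E]
    [CompleteSpace E] {f : V → E} (hf : Integrable f) {v : V} (hv : ContinuousAt f v) :
    Tendsto (fun c : ℝ =>
      ∫ w : V, cexp (-(c : ℂ)⁻¹ * ‖w‖ ^ 2 + 2 * Real.pi * I * ⟪v, w⟫) • 𝓕 f w)
      atTop (𝓝 (f v)) := by
  refine (Real.tendsto_integral_gaussian_smul' hf hv).congr' ?_
  filter_upwards [eventually_gt_atTop 0] with c hc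
  have hgauss :
      Integrable fun w : V => cexp (-(c : ℂ)⁻¹ * ‖w‖ ^ 2 + 2 * Real.pi * I * ⟪v, w⟫) :=
    GaussianFourier.integrable_cexp_neg_mul_sq_norm_add (by simpa) _ _
  have hswap : ∫ w : V,
        𝓕 (fun w : V => cexp (-(c : ℂ)⁻¹ * ‖w‖ ^ 2 + 2 * Real.pi * I * ⟪v, w⟫)) w • f w =
      ∫ w : V, cexp (-(c : ℂ)⁻¹ * ‖w‖ ^ 2 + 2 * Real.pi * I * ⟪v, w⟫) • 𝓕 f w := by
    simpa using! VectorFourier.integral_fourierIntegral_smul_eq_flip (L := innerₗ V)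
      Real.continuous_fourierChar continuous_inner hgauss hf
  rw [← hswap]
  congr with w
  rw [fourier_gaussian_innerProductSpace' (by simpa), div_inv_eq_mul, div_inv_eq_mul,
    mul_right_comm _ (c : ℂ)]

lemma norm_le_re_of_fourier_nonneg {f : V → ℂ} (hf : Integrable f) (hc : Continuous f)
    (hpos : ∀ w, 0 ≤ 𝓕 f w) (v : V) : ‖f v‖ ≤ (f 0).re := by
  have hzero := (continuous_re.tendsto _).comp
    (tendsto_integral_cexp_smul_fourier hf (hc.continuousAt (x := 0)))
  refine le_of_tendsto_of_tendsto' (tendsto_integral_cexp_smul_fourier hf hc.continuousAt).norm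
    hzero fun c => ?_
  have hterm (w : V) : cexp (-(c : ℂ)⁻¹ * ‖w‖ ^ 2 + 2 * Real.pi * I * ⟪(0 : V), w⟫) • 𝓕 f w =
      (‖cexp (-(c : ℂ)⁻¹ * ‖w‖ ^ 2 + 2 * Real.pi * I * ⟪v, w⟫) • 𝓕 f w‖ : ℝ) := by
    rw [norm_smul, norm_cexp_gaussian, ofReal_mul, ← eq_coe_norm_of_nonneg (hpos w)]
    simp
  simp only [Function.comp_apply, hterm, integral_complex_ofReal, ofReal_re]
  exact norm_integral_le_integral_norm _

lemma fourierR_ofLp {n : ℕ} (h : (Fin n → ℝ) → ℂ) (w : EuclideanSpace ℝ (Fin n)) :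
    𝓕 (fun v : EuclideanSpace ℝ (Fin n) => h v.ofLp) w = fourierR h w.ofLp := by
  rw [Real.fourier_eq', fourierR, ← (PiLp.volume_preserving_ofLp (Fin n)).integral_comp
    (MeasurableEquiv.toLp 2 (Fin n → ℝ)).symm.measurableEmbedding]
  congr with v
  rw [smul_eq_mul, mul_comm, eC]
  simp only [PiLp.inner_apply, RCLike.inner_apply, conj_trivial]
  push_cast
  ring_nf

lemma norm_le_re_of_fourierR_nonneg {n : ℕ} {h : (Fin n → ℝ) → ℂ} (hc : Continuous h)
    (hint : Integrable h) (hpos : ∀ ξ, 0 ≤ fourierR h ξ) (x : Fin n → ℝ) : ‖h x‖ ≤ (h 0).re := by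
  simpa using norm_le_re_of_fourier_nonneg
    ((PiLp.volume_preserving_ofLp (Fin n)).integrable_comp_of_integrable hint)
    (hc.comp (PiLp.continuous_ofLp 2 _))
    (fun w => (hpos w.ofLp).trans_eq (fourierR_ofLp h w).symm) (WithLp.toLp 2 x)

end PositiveDefinite

section Lintegral

open Filter Topology

variable {X : Type*} [MeasurableSpace X] {μ : Measure X}

lemma sq_lintegral_mul_le {w φ : X → ℝ≥0∞}
    (hw : AEMeasurable w μ) (hφ : AEMeasurable φ μ) :
    (∫⁻ x, w x * φ x ∂μ) ^ 2 ≤ (∫⁻ x, w x ∂μ) * ∫⁻ x, w x * φ x ^ 2 ∂μ := by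
  have hsplit (a b : ℝ≥0∞) : a * b = a ^ (1 / 2 : ℝ) * (a * b ^ 2) ^ (1 / 2 : ℝ) := by
    rw [← ENNReal.mul_rpow_of_nonneg _ _ (by norm_num), ← mul_assoc, ← sq, ← mul_pow,
      ← ENNReal.rpow_natCast, ← ENNReal.rpow_mul]
    norm_num
  have hsqrt (a : ℝ≥0∞) : (a ^ (1 / 2 : ℝ)) ^ 2 = a := by
    rw [← ENNReal.rpow_natCast, ← ENNReal.rpow_mul]
    norm_num
  calc (∫⁻ x, w x * φ x ∂μ) ^ 2
      = (∫⁻ x, w x ^ (1 / 2 : ℝ) * (w x * φ x ^ 2) ^ (1 / 2 : ℝ) ∂μ) ^ 2 := by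
        simp only [← hsplit]
    _ ≤ ((∫⁻ x, w x ∂μ) ^ (1 / 2 : ℝ) * (∫⁻ x, w x * φ x ^ 2 ∂μ) ^ (1 / 2 : ℝ)) ^ 2 := by
        gcongr
        exact ENNReal.lintegral_mul_norm_pow_le hw (hw.mul (hφ.pow_const 2)) (by norm_num)
          (by norm_num) (by norm_num)
    _ = (∫⁻ x, w x ∂μ) * ∫⁻ x, w x * φ x ^ 2 ∂μ := by
        rw [mul_pow, hsqrt, hsqrt]

lemma ofReal_integral_le_lintegral_ofReal {u : X → ℝ} (hu : Integrable u μ) :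
    ENNReal.ofReal (∫ x, u x ∂μ) ≤ ∫⁻ x, ENNReal.ofReal (u x) ∂μ := by
  rw [integral_eq_lintegral_pos_part_sub_lintegral_neg_part hu]
  exact (ENNReal.ofReal_le_ofReal (sub_le_self _ ENNReal.toReal_nonneg)).trans
    ENNReal.ofReal_toReal_le

lemma lintegral_le_of_ae_tendsto {F : ℕ → X → ℝ≥0∞} {f : X → ℝ≥0∞} {b : ℕ → ℝ≥0∞} {B : ℝ≥0∞}
    (hF : ∀ j, AEMeasurable (F j) μ)
    (hlim : ∀ᵐ x ∂μ, Tendsto (fun j => F j x) atTop (𝓝 (f x)))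
    (hle : ∀ j, ∫⁻ x, F j x ∂μ ≤ b j) (hb : Tendsto b atTop (𝓝 B)) : ∫⁻ x, f x ∂μ ≤ B :=
  calc ∫⁻ x, f x ∂μ
      = ∫⁻ x, liminf (fun j => F j x) atTop ∂μ :=
        lintegral_congr_ae (hlim.mono fun x hx => hx.liminf_eq.symm)
    _ ≤ liminf (fun j => ∫⁻ x, F j x ∂μ) atTop := lintegral_liminf_le' hF
    _ ≤ liminf b atTop := liminf_le_liminf (.of_forall hle)
    _ = B := hb.liminf_eq

end Lintegral

section Convolution

open Filter Topology Metric
open scoped Convolution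
open ContinuousLinearMap (lsmul)

variable {E F : Type*} [NormedAddCommGroup E] [NormedSpace ℝ E] [FiniteDimensional ℝ E]
  [MeasurableSpace E] [BorelSpace E] {μ : Measure E} [μ.IsAddHaarMeasure]
  [NormedAddCommGroup F] [NormedSpace ℝ F]

lemma enorm_convolution_sq_le {k : E → ℝ} {f : E → F} (hk : AEStronglyMeasurable k μ)
    (hf : AEStronglyMeasurable f μ) (x : E) :
    ‖(k ⋆[lsmul ℝ ℝ, μ] f) x‖ₑ ^ 2 ≤
      (∫⁻ y, ‖k y‖ₑ ∂μ) * ∫⁻ y, ‖k y‖ₑ * ‖f (x - y)‖ₑ ^ 2 ∂μ := by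
  have hfx : AEStronglyMeasurable (fun y => f (x - y)) μ :=
    hf.comp_quasiMeasurePreserving (quasiMeasurePreserving_sub_left μ x)
  refine le_trans (pow_le_pow_left' ?_ 2) (sq_lintegral_mul_le hk.enorm hfx.enorm)
  rw [convolution_lsmul]
  simpa only [enorm_smul] using enorm_integral_le_lintegral_enorm fun y => k y • f (x - y)

lemma setLIntegral_enorm_convolution_sq_le {k : E → ℝ} {f : E → F}
    (hk : AEStronglyMeasurable k μ) (hf : AEStronglyMeasurable f μ) {S D : Set E}
    (hSD : S - Function.support k ⊆ D) :
    ∫⁻ x in S, ‖(k ⋆[lsmul ℝ ℝ, μ] f) x‖ₑ ^ 2 ∂μ ≤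
      (∫⁻ y, ‖k y‖ₑ ∂μ) ^ 2 * ∫⁻ x in D, ‖f x‖ₑ ^ 2 ∂μ := by
  have htranslate (y : E) :
      ∫⁻ x in S, ‖k y‖ₑ * ‖f (x - y)‖ₑ ^ 2 ∂μ ≤ ‖k y‖ₑ * ∫⁻ x in D, ‖f x‖ₑ ^ 2 ∂μ := by
    rw [lintegral_const_mul' _ _ enorm_ne_top]
    rcases eq_or_ne (k y) 0 with hky | hky
    · simp only [hky, enorm_zero, zero_mul, le_refl]
    · refine mul_le_mul' le_rfl ?_
      rw [← (measurePreserving_sub_right μ y).setLIntegral_comp_preimage_emb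
        (MeasurableEquiv.subRight y).measurableEmbedding (fun z => ‖f z‖ₑ ^ 2) D]
      exact lintegral_mono_set fun x hx => hSD (sub_mem_sub hx hky)
  have hmeas : AEMeasurable (fun p : E × E => ‖k p.2‖ₑ * ‖f (p.1 - p.2)‖ₑ ^ 2)
      ((μ.restrict S).prod μ) := by
    refine hk.comp_snd.enorm.mul (.pow_const (AEStronglyMeasurable.enorm ?_) 2)
    exact (hf.comp_quasiMeasurePreserving (quasiMeasurePreserving_sub_of_right_invariant μ μ)
      ).mono_measure (Measure.prod_mono Measure.restrict_le_self le_rfl)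
  calc ∫⁻ x in S, ‖(k ⋆[lsmul ℝ ℝ, μ] f) x‖ₑ ^ 2 ∂μ
      ≤ ∫⁻ x in S, (∫⁻ y, ‖k y‖ₑ ∂μ) * ∫⁻ y, ‖k y‖ₑ * ‖f (x - y)‖ₑ ^ 2 ∂μ ∂μ :=
        lintegral_mono fun x => enorm_convolution_sq_le hk hf x
    _ = (∫⁻ y, ‖k y‖ₑ ∂μ) * ∫⁻ y, ∫⁻ x in S, ‖k y‖ₑ * ‖f (x - y)‖ₑ ^ 2 ∂μ ∂μ := by
        rw [lintegral_const_mul'' _ hmeas.lintegral_prod_right', lintegral_lintegral_swap hmeas]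
    _ ≤ (∫⁻ y, ‖k y‖ₑ ∂μ) * ∫⁻ y, ‖k y‖ₑ * ∫⁻ x in D, ‖f x‖ₑ ^ 2 ∂μ ∂μ := by
        gcongr with y
        exact htranslate y
    _ = (∫⁻ y, ‖k y‖ₑ ∂μ) ^ 2 * ∫⁻ x in D, ‖f x‖ₑ ^ 2 ∂μ := by
        rw [lintegral_mul_const'' _ hk.enorm, sq, mul_assoc]

lemma ae_tendsto_convolution [CompleteSpace F] {κ : Type*} {l : Filter κ} {k : κ → E → ℝ}
    {r : κ → ℝ} {f : E → F} (C : ℝ) (hr : Tendsto r l (𝓝[>] 0))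
    (hsupp : ∀ᶠ i in l, Function.support (k i) ⊆ closedBall 0 (r i))
    (hone : ∀ᶠ i in l, ∫ x, k i x ∂μ = 1)
    (hbound : ∀ᶠ i in l, ∀ x, |k i x| ≤ C / μ.real (closedBall 0 (r i)))
    (hf : LocallyIntegrable f μ) :
    ∀ᵐ x ∂μ, Tendsto (fun i => (k i ⋆[lsmul ℝ ℝ, μ] f) x) l (𝓝 (f x)) := by
  filter_upwards [(Besicovitch.vitaliFamily μ).ae_tendsto_average_norm_sub hf] with x hx
  simp only [convolution_eq_swap, ContinuousLinearMap.lsmul_apply]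
  refine tendsto_integral_smul_of_tendsto_average_norm_sub C
    ((hx.comp (Besicovitch.tendsto_filterAt μ x)).comp hr)
    (.of_forall fun i => hf.integrableOn_isCompact (isCompact_closedBall _ _)) ?_ ?_ ?_
  · refine tendsto_const_nhds.congr' (hone.mono fun i hi => ?_)
    exact ((integral_sub_left_eq_self (k i) μ x).trans hi).symm
  · filter_upwards [hsupp] with i hi y hy
    rw [mem_closedBall, dist_comm, dist_eq_norm]
    exact mem_closedBall_zero_iff.mp (hi hy)
  · filter_upwards [hbound] with i hi y
    simpa only [Measure.addHaar_real_closedBall_center] using hi (x - y)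

end Convolution

section BumpKernel

open Filter Topology Metric
open scoped Convolution
open ContinuousLinearMap (lsmul)

variable {E F : Type*} [NormedAddCommGroup E] [NormedSpace ℝ E] [FiniteDimensional ℝ E]
  [MeasurableSpace E] {μ : Measure E}

/-- The self-convolution of the normalised bump `φ`. It approximates the Dirac mass as well as `φ`
does, and its Fourier transform, being a square, is nonnegative. -/
noncomputable def bumpKernel (μ : Measure E) (φ : ContDiffBump (0 : E)) : E → ℝ :=
  φ.normed μ ⋆[lsmul ℝ ℝ, μ] φ.normed μ

variable (φ : ContDiffBump (0 : E))

lemma bumpKernel_nonneg (x : E) : 0 ≤ bumpKernel μ φ x :=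
  integral_nonneg fun _ => mul_nonneg (φ.nonneg_normed _) (φ.nonneg_normed _)

variable [BorelSpace E] [μ.IsAddHaarMeasure]

lemma continuous_bumpKernel : Continuous (bumpKernel μ φ) :=
  φ.hasCompactSupport_normed.continuous_convolution_left _ φ.continuous_normed
    φ.integrable_normed.locallyIntegrable

lemma hasCompactSupport_bumpKernel : HasCompactSupport (bumpKernel μ φ) :=
  φ.hasCompactSupport_normed.convolution _ φ.hasCompactSupport_normed

lemma support_bumpKernel_subset :
    Function.support (bumpKernel μ φ) ⊆ closedBall 0 (2 * φ.rOut) := by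
  refine (support_convolution_subset _).trans ?_
  rw [φ.support_normed_eq, ball_add_ball φ.rOut_pos φ.rOut_pos, add_zero, ← two_mul]
  exact ball_subset_closedBall

lemma integral_bumpKernel : ∫ x, bumpKernel μ φ x ∂μ = 1 := by
  rw [bumpKernel, integral_convolution _ φ.integrable_normed φ.integrable_normed,
    φ.integral_normed, ContinuousLinearMap.lsmul_apply, smul_eq_mul, one_mul]

lemma lintegral_enorm_bumpKernel : ∫⁻ x, ‖bumpKernel μ φ x‖ₑ ∂μ = 1 := by
  rw [← ofReal_integral_norm_eq_lintegral_enorm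
    ((continuous_bumpKernel φ).integrable_of_hasCompactSupport (hasCompactSupport_bumpKernel φ))]
  simp only [Real.norm_of_nonneg (bumpKernel_nonneg φ _), integral_bumpKernel, ENNReal.ofReal_one]

lemma bumpKernel_le {K : ℝ} (hK : φ.rOut ≤ K * φ.rIn) (x : E) :
    bumpKernel μ φ x ≤
      (2 * K) ^ Module.finrank ℝ E / μ.real (closedBall 0 (2 * φ.rOut)) := by
  have hsup (y : E) := φ.normed_le_div_measure_closedBall_rOut μ K hK y
  calc bumpKernel μ φ x
      ≤ ∫ y, φ.normed μ y *
          (K ^ Module.finrank ℝ E / μ.real (closedBall 0 φ.rOut)) ∂μ := by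
        refine integral_mono_of_nonneg ?_ (φ.integrable_normed.mul_const _) ?_
        · exact .of_forall fun y => mul_nonneg (φ.nonneg_normed _) (φ.nonneg_normed _)
        · exact .of_forall fun y => mul_le_mul_of_nonneg_left (hsup _) (φ.nonneg_normed _)
    _ = K ^ Module.finrank ℝ E / μ.real (closedBall 0 φ.rOut) := by
        rw [integral_mul_const, φ.integral_normed, one_mul]
    _ = (2 * K) ^ Module.finrank ℝ E / μ.real (closedBall 0 (2 * φ.rOut)) := by
        rw [Measure.real, Measure.real, Measure.addHaar_closedBall_mul μ 0 zero_le_two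
          φ.rOut_pos.le, ENNReal.toReal_mul, ENNReal.toReal_ofReal (by positivity), mul_pow,
          mul_div_mul_left _ _ (by positivity)]

lemma ae_tendsto_convolution_bumpKernel [NormedAddCommGroup F] [NormedSpace ℝ F]
    [CompleteSpace F] {κ : Type*} {l : Filter κ}
    {φ : κ → ContDiffBump (0 : E)} {f : E → F} {K : ℝ}
    (hφ : Tendsto (fun i => (φ i).rOut) l (𝓝 0)) (hK : ∀ᶠ i in l, (φ i).rOut ≤ K * (φ i).rIn)
    (hf : LocallyIntegrable f μ) :
    ∀ᵐ x ∂μ, Tendsto (fun i => (bumpKernel μ (φ i) ⋆[lsmul ℝ ℝ, μ] f) x) l (𝓝 (f x)) := by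
  refine ae_tendsto_convolution ((2 * K) ^ Module.finrank ℝ E) (r := fun i => 2 * (φ i).rOut)
    (tendsto_nhdsWithin_iff.mpr ⟨?_, .of_forall fun i => ?_⟩)
    (.of_forall fun i => support_bumpKernel_subset (φ i))
    (.of_forall fun i => integral_bumpKernel (φ i)) ?_ hf
  · simpa only [mul_zero] using hφ.const_mul 2
  · exact mul_pos two_pos (φ i).rOut_pos
  · filter_upwards [hK] with i hi x
    rw [abs_of_nonneg (bumpKernel_nonneg _ x)]
    exact bumpKernel_le (φ i) hi x

end BumpKernel

section Convex

open Filter Topology Metric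

lemma mem_nhds_zero_of_convex_of_symmetric {E : Type*} [AddCommGroup E] [Module ℝ E]
    [TopologicalSpace E] [IsTopologicalAddGroup E] [ContinuousConstSMul ℝ E] {D : Set E}
    (hconv : Convex ℝ D) (hsym : ∀ x ∈ D, -x ∈ D) (hint : (interior D).Nonempty) :
    D ∈ 𝓝 0 := by
  obtain ⟨x, hx⟩ := hint
  have hmid := hconv.combo_interior_self_mem_interior (a := 1 / 2) (b := 1 / 2) hx
    (hsym x (interior_subset hx)) (by norm_num) (by norm_num) (by norm_num)
  rw [smul_neg, add_neg_cancel] at hmid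
  exact mem_interior_iff_mem_nhds.mp hmid

lemma smul_sub_closedBall_subset_of_convex {E : Type*} [SeminormedAddCommGroup E]
    [NormedSpace ℝ E] {D : Set E} (hD : Convex ℝ D) {ρ s : ℝ}
    (hρ : closedBall 0 ρ ⊆ D) (hs0 : 0 ≤ s) (hs1 : s < 1) :
    s • D - closedBall 0 ((1 - s) * ρ) ⊆ D := by
  have hball : -closedBall (0 : E) ((1 - s) * ρ) = (1 - s) • closedBall 0 ρ := by
    rw [smul_closedBall' (sub_pos.mpr hs1).ne', neg_closedBall, neg_zero, smul_zero,
      Real.norm_of_nonneg (sub_pos.mpr hs1).le]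
  rw [sub_eq_add_neg, hball]
  exact (add_subset_add_left (smul_set_mono hρ)).trans
    (hD.set_combo_subset hs0 (sub_pos.mpr hs1).le (add_sub_cancel s 1))

lemma exists_bumps_of_convex {E : Type*} [NormedAddCommGroup E] [NormedSpace ℝ E] {D : Set E}
    (hconv : Convex ℝ D) (hzero : D ∈ 𝓝 0) :
    ∃ (s : ℕ → ℝ) (φ : ℕ → ContDiffBump (0 : E)),
      (∀ j, 0 < s j) ∧ Tendsto s atTop (𝓝 1) ∧ Tendsto (fun j => (φ j).rOut) atTop (𝓝 0) ∧
      (∀ j, (φ j).rOut ≤ 2 * (φ j).rIn) ∧ (∀ j, (φ j).rOut ≤ 1 / 2) ∧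
      ∀ j, s j • D - closedBall 0 (2 * (φ j).rOut) ⊆ D := by
  obtain ⟨r, hr, hball⟩ := nhds_basis_closedBall.mem_iff.mp hzero
  set ρ : ℝ := min r 1
  have hρ : 0 < ρ := lt_min hr one_pos
  obtain ⟨s, -, hs, hs_lim⟩ := exists_seq_strictMono_tendsto' (zero_lt_one' ℝ)
  have hgap (j : ℕ) : 0 < (1 - s j) * ρ := mul_pos (sub_pos.mpr (hs j).2) hρ
  refine ⟨s, fun j => ⟨(1 - s j) * ρ / 4, (1 - s j) * ρ / 2, by linarith [hgap j],
    by linarith [hgap j]⟩, fun j => (hs j).1, hs_lim, ?_, fun j => ?_, fun j => ?_, fun j => ?_⟩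
  · simpa using ((hs_lim.const_sub 1).mul_const ρ).div_const 2
  · change (1 - s j) * ρ / 2 ≤ 2 * ((1 - s j) * ρ / 4)
    linarith
  · exact div_le_div_of_nonneg_right
      (mul_le_one₀ (sub_le_self 1 (hs j).1.le) hρ.le (min_le_right r 1)) zero_le_two
  · rw [mul_div_cancel₀ _ two_ne_zero]
    exact smul_sub_closedBall_subset_of_convex hconv
      ((closedBall_subset_closedBall (min_le_left r 1)).trans hball) (hs j).1.le (hs j).2

end Convex

section FourierR

open scoped Convolution ComplexConjugate
open ContinuousLinearMap (lsmul)

variable {n : ℕ}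

lemma integrable_mul_eC {f : (Fin n → ℝ) → ℂ} (hf : Integrable f) (ξ : Fin n → ℝ) :
    Integrable fun x => f x * eC (-∑ i, ξ i * x i) := by
  have hcont : Continuous eC := by
    unfold eC
    fun_prop
  refine hf.mul_bdd (c := 1) (Continuous.aestronglyMeasurable (by fun_prop))
    (.of_forall fun x => ?_)
  rw [eC_eq_fourierChar, Circle.norm_coe]

lemma fourierR_convolution {f g : (Fin n → ℝ) → ℝ} (hf : Integrable f) (hg : Integrable g)
    (ξ : Fin n → ℝ) :
    fourierR (fun x => ((f ⋆[lsmul ℝ ℝ, volume] g) x : ℂ)) ξ =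
      fourierR (fun x => (f x : ℂ)) ξ * fourierR (fun x => (g x : ℂ)) ξ := by
  set u : (Fin n → ℝ) → ℂ := fun x => f x * eC (-∑ i, ξ i * x i) with hu
  set v : (Fin n → ℝ) → ℂ := fun x => g x * eC (-∑ i, ξ i * x i) with hv
  have hconv (x : Fin n → ℝ) : ((f ⋆[lsmul ℝ ℝ, volume] g) x : ℂ) * eC (-∑ i, ξ i * x i) =
      (u ⋆[lsmul ℂ ℂ, volume] v) x := by
    rw [convolution_lsmul, convolution_lsmul, ← integral_complex_ofReal, ← integral_mul_const]
    refine integral_congr_ae (.of_forall fun t => ?_)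
    have hphase : -∑ i, ξ i * x i = -∑ i, ξ i * t i + -∑ i, ξ i * (x - t) i := by
      rw [← neg_add, ← Finset.sum_add_distrib]
      simp only [Pi.sub_apply, ← mul_add, add_sub_cancel]
    simp only [hu, hv, hphase, eC_add, smul_eq_mul, ofReal_mul]
    ring
  simp only [fourierR, hconv]
  exact integral_convolution _ (integrable_mul_eC hf.ofReal ξ) (integrable_mul_eC hg.ofReal ξ)

lemma conj_fourierR_ofReal (f : (Fin n → ℝ) → ℝ) (ξ : Fin n → ℝ) :
    conj (fourierR (fun x => (f x : ℂ)) ξ) = fourierR (fun x => (f (-x) : ℂ)) ξ := by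
  rw [fourierR, fourierR, ← integral_conj, ← integral_neg_eq_self]
  refine integral_congr_ae (.of_forall fun x => ?_)
  simp only [map_mul, conj_ofReal, eC, ← exp_conj, conj_I, map_ofNat, Pi.neg_apply, mul_neg,
    Finset.sum_neg_distrib, neg_neg, ofReal_neg, neg_mul]

lemma fourierR_bumpKernel (φ : ContDiffBump (0 : Fin n → ℝ)) (ξ : Fin n → ℝ) :
    fourierR (fun x => (bumpKernel volume φ x : ℂ)) ξ =
      (‖fourierR (fun x => (φ.normed volume x : ℂ)) ξ‖ ^ 2 : ℝ) := by
  have heven := conj_fourierR_ofReal (φ.normed volume) ξ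
  simp only [φ.normed_neg] at heven
  rw [bumpKernel, fourierR_convolution φ.integrable_normed φ.integrable_normed, ofReal_pow,
    ← mul_conj', heven]

lemma fourierR_bumpKernel_nonneg (φ : ContDiffBump (0 : Fin n → ℝ)) (ξ : Fin n → ℝ) :
    0 ≤ fourierR (fun x => (bumpKernel volume φ x : ℂ)) ξ := by
  rw [fourierR_bumpKernel, zero_le_real]
  positivity

lemma fourierR_zero (h : (Fin n → ℝ) → ℂ) : fourierR h 0 = ∫ x, h x := by
  simp [fourierR, eC]

lemma admDel_bumpKernel {D : Set (Fin n → ℝ)} (φ : ContDiffBump (0 : Fin n → ℝ))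
    (hD : Metric.closedBall 0 (2 * φ.rOut) ⊆ D) :
    AdmDel D fun x => (bumpKernel volume φ x : ℂ) := by
  have hcont := continuous_bumpKernel (μ := volume) φ
  refine ⟨continuous_ofReal.comp hcont,
    (hcont.integrable_of_hasCompactSupport (hasCompactSupport_bumpKernel φ)).ofReal,
    fourierR_bumpKernel_nonneg φ, fun x hx => ?_, ?_⟩
  · have hzero : bumpKernel volume φ x = 0 := Function.notMem_support.mp fun hmem =>
      hx (hD (support_bumpKernel_subset φ hmem))
    simp only [hzero, ofReal_zero, le_refl]
  · rw [fourierR_zero, integral_complex_ofReal, integral_bumpKernel, ofReal_one]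

lemma exists_admDel {D : Set (Fin n → ℝ)} (hD : D ∈ nhds 0) : ∃ h, AdmDel D h := by
  obtain ⟨ρ, hρ, hball⟩ := Metric.nhds_basis_closedBall.mem_iff.mp hD
  exact ⟨_, admDel_bumpKernel ⟨ρ / 4, ρ / 2, by positivity, by linarith⟩
    (by rwa [mul_div_cancel₀ _ two_ne_zero])⟩

lemma AdmDel.norm_le {D : Set (Fin n → ℝ)} {h : (Fin n → ℝ) → ℂ} (hh : AdmDel D h)
    (x : Fin n → ℝ) : ‖h x‖ ≤ (h 0).re :=
  norm_le_re_of_fourierR_nonneg hh.1 hh.2.1 hh.2.2.1 x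

lemma AdmDel.re_pos {D : Set (Fin n → ℝ)} {h : (Fin n → ℝ) → ℂ} (hh : AdmDel D h) :
    0 < (h 0).re := by
  by_contra! hle
  have hzero : h = 0 := funext fun x => norm_le_zero_iff.mp ((hh.norm_le x).trans hle)
  obtain ⟨-, -, -, -, hone⟩ := hh
  simp [hzero, fourierR] at hone

lemma fourierR_dilation (h : (Fin n → ℝ) → ℂ) {s : ℝ} (hs : 0 < s) (ξ : Fin n → ℝ) :
    fourierR (fun x => ((s ^ n)⁻¹ : ℝ) * h (s⁻¹ • x)) ξ = fourierR h (s • ξ) := by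
  have hphase (x : Fin n → ℝ) : ∑ i, (s • ξ) i * (s⁻¹ • x) i = ∑ i, ξ i * x i := by
    refine Finset.sum_congr rfl fun i _ => ?_
    simp only [Pi.smul_apply, smul_eq_mul]
    field_simp
  have hsubst := Measure.integral_comp_smul_of_nonneg (volume : Measure (Fin n → ℝ))
    (fun x => h x * eC (-∑ i, (s • ξ) i * x i)) s⁻¹ (hR := by positivity)
  simp only [hphase, Module.finrank_fin_fun, inv_pow, inv_inv] at hsubst
  simp only [fourierR, mul_assoc]
  rw [integral_const_mul, hsubst, ← real_smul, inv_smul_smul₀ (by positivity)]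

lemma AdmDel.dilation {D : Set (Fin n → ℝ)} {h : (Fin n → ℝ) → ℂ} (hh : AdmDel D h) {s : ℝ}
    (hs : 0 < s) : AdmDel (s • D) fun x => ((s ^ n)⁻¹ : ℝ) * h (s⁻¹ • x) := by
  obtain ⟨hcont, hint, hpos, hneg, hone⟩ := hh
  refine ⟨by fun_prop, (hint.comp_smul (inv_ne_zero hs.ne')).const_mul _, fun ξ => ?_,
    fun x hx => ?_, ?_⟩
  · rw [fourierR_dilation h hs]
    exact hpos _
  · refine mul_nonpos_of_nonneg_of_nonpos ?_ (hneg _ ?_)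
    · rw [zero_le_real]
      positivity
    · rwa [← mem_smul_set_iff_inv_smul_mem₀ hs.ne']
  · rw [fourierR_dilation h hs, smul_zero, hone]

end FourierR

noncomputable section Torus

local instance : MeasureSpace UnitAddCircle := ⟨AddCircle.haarAddCircle⟩

local instance : Measure.IsAddHaarMeasure (volume : Measure UnitAddCircle) :=
  inferInstanceAs (Measure.IsAddHaarMeasure AddCircle.haarAddCircle)

local instance : IsProbabilityMeasure (volume : Measure UnitAddCircle) :=
  inferInstanceAs (IsProbabilityMeasure AddCircle.haarAddCircle)

open UnitAddTorus
open scoped ComplexConjugate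

variable {ι : Type*}

/-- The covering homomorphism from `ι → ℝ` onto the torus `(ℝ/ℤ)^ι`. Functions on the torus pull
back along it to `1`-periodic functions. -/
def toTorus : (ι → ℝ) →+ UnitAddTorus ι :=
  (QuotientAddGroup.mk' (AddSubgroup.zmultiples (1 : ℝ))).compLeft ι

lemma toTorus_apply (x : ι → ℝ) : toTorus x = fun i => (x i : UnitAddCircle) := rfl

lemma isOpenQuotientMap_toTorus : IsOpenQuotientMap (toTorus : (ι → ℝ) → UnitAddTorus ι) :=
  .piMap fun _ => QuotientAddGroup.isOpenQuotientMap_mk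

lemma IsPeriodic.exists_eq_comp_toTorus {n : ℕ} {f : (Fin n → ℝ) → ℂ} (hf : IsPeriodic f) :
    ∃ g : UnitAddTorus (Fin n) → ℂ, f = g ∘ toTorus := by
  refine (Function.factorsThrough_iff f).mp fun x y hxy => ?_
  have hint : ∀ i, ∃ m : ℤ, x i + m = y i := fun i => by
    obtain ⟨m, hm⟩ := AddSubgroup.mem_zmultiples_iff.mp (QuotientAddGroup.eq.mp (congrFun hxy i))
    refine ⟨m, ?_⟩
    rw [zsmul_one] at hm
    linarith
  choose m hm using hint
  rw [← hf x m]
  exact congrArg f (funext hm)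

/-- The half-open unit cube `∏ i, (a i, a i + 1]`, a fundamental domain of the torus. -/
def cubeIoc (a : ι → ℝ) : Set (ι → ℝ) := {x | ∀ i, x i ∈ Ioc (a i) (a i + 1)}

lemma cubeIoc_eq_pi (a : ι → ℝ) : cubeIoc a = univ.pi fun i => Ioc (a i) (a i + 1) := by
  ext x
  simp only [cubeIoc, mem_univ_pi]
  rfl

lemma cubeIoc_mem_nhds [Finite ι] (x : ι → ℝ) : cubeIoc (fun i => x i - 1 / 2) ∈ nhds x := by
  rw [cubeIoc_eq_pi]
  exact set_pi_mem_nhds finite_univ fun i _ => Ioc_mem_nhds (by linarith) (by linarith)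

variable [Fintype ι]

lemma cubeIoc_ae_eq_box (n : ℕ) :
    cubeIoc (fun _ : Fin n => -(1 / 2 : ℝ)) =ᵐ[volume] box n := by
  have hend : -(1 / 2 : ℝ) + 1 = 1 / 2 := by norm_num
  rw [cubeIoc_eq_pi, hend]
  exact Measure.univ_pi_Ioc_ae_eq_Icc

lemma integrableOn_cubeIoc_comp_toTorus {E : Type*} [NormedAddCommGroup E]
    (g : UnitAddTorus ι → E) (a : ι → ℝ) :
    IntegrableOn (g ∘ toTorus) (cubeIoc a) ↔ Integrable g :=
  (integrableOn_iff_comap_subtypeVal (.univ_pi' fun _ => measurableSet_Ioc)).trans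
    ((measurePreserving_equivPiIoc a).symm.integrable_comp_emb
      (measurableEquivPiIoc a).symm.measurableEmbedding)

lemma integrableOn_box_comp_toTorus {E : Type*} [NormedAddCommGroup E] {n : ℕ}
    (g : UnitAddTorus (Fin n) → E) : IntegrableOn (g ∘ toTorus) (box n) ↔ Integrable g := by
  rw [← integrableOn_congr_set_ae (cubeIoc_ae_eq_box n), integrableOn_cubeIoc_comp_toTorus]

lemma setLIntegral_box_comp_toTorus {n : ℕ} (φ : UnitAddTorus (Fin n) → ℝ≥0∞) :
    ∫⁻ x in box n, φ (toTorus x) = ∫⁻ θ, φ θ := by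
  rw [lintegral_preimage φ fun _ => -(1 / 2), ← setLIntegral_congr (cubeIoc_ae_eq_box n)]
  rfl

lemma locallyIntegrable_comp_toTorus {E : Type*} [NormedAddCommGroup E]
    {g : UnitAddTorus ι → E} (hg : Integrable g) : LocallyIntegrable (g ∘ toTorus) :=
  fun x => ⟨_, cubeIoc_mem_nhds x, (integrableOn_cubeIoc_comp_toTorus g _).mpr hg⟩

lemma mFourier_toTorus (ν : ι → ℤ) (x : ι → ℝ) :
    mFourier ν (toTorus x) = eC (∑ i, ν i * x i) := by
  rw [eC_sum]
  refine Finset.prod_congr rfl fun i _ => ?_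
  rw [toTorus_apply, fourier_coe_apply, eC]
  congr 1
  push_cast
  ring

lemma fourierCoeffT_comp_toTorus {n : ℕ} (g : UnitAddTorus (Fin n) → ℂ) (ν : Fin n → ℤ) :
    fourierCoeffT (g ∘ toTorus) ν = mFourierCoeff g ν := by
  rw [mFourierCoeff_eq_integral g ν fun _ => -(1 / 2), fourierCoeffT,
    ← setIntegral_congr_set (cubeIoc_ae_eq_box n)]
  refine integral_congr_ae (.of_forall fun x => ?_)
  change g (toTorus x) * _ = mFourier (-ν) (toTorus x) * g (toTorus x)
  rw [mFourier_toTorus, mul_comm]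
  simp only [Pi.neg_apply, Int.cast_neg, neg_mul, Finset.sum_neg_distrib]

lemma integral_mFourier (ν : ι → ℤ) :
    ∫ θ : UnitAddTorus ι, mFourier ν θ = if ν = 0 then 1 else 0 := by
  have h := orthonormal_iff_ite.mp (orthonormal_mFourier (d := ι)) 0 ν
  simpa only [ContinuousMap.inner_toLp, ← mFourier_neg, ← mFourier_add, neg_zero, add_zero,
    eq_comm] using h

lemma fourierCoeffT_one {n : ℕ} (ν : Fin n → ℤ) :
    fourierCoeffT (fun _ => 1) ν = if ν = 0 then 1 else 0 := by
  refine (fourierCoeffT_comp_toTorus (fun _ => 1) ν).trans ?_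
  simp only [mFourierCoeff, smul_eq_mul, mul_one, integral_mFourier, neg_eq_zero]

lemma norm_mFourier_apply (ν : ι → ℤ) (θ : UnitAddTorus ι) : ‖mFourier ν θ‖ = 1 := by
  simp only [mFourier, ContinuousMap.coe_mk, norm_prod, fourier_apply, Circle.norm_coe,
    Finset.prod_const_one]

lemma mFourier_apply_add (ν : ι → ℤ) (θ τ : UnitAddTorus ι) :
    mFourier ν (θ + τ) = mFourier ν θ * mFourier ν τ := by
  simp only [mFourier, ContinuousMap.coe_mk, Pi.add_apply, fourier_apply, smul_add,
    AddCircle.toCircle_add, Circle.coe_mul, Finset.prod_mul_distrib]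

lemma fourierR_intCast {n : ℕ} (h : (Fin n → ℝ) → ℂ) (ν : Fin n → ℤ) :
    fourierR h (fun i => (ν i : ℝ)) = ∫ x, h x * mFourier (-ν) (toTorus x) := by
  refine integral_congr_ae (.of_forall fun x => ?_)
  simp only [mFourier_toTorus, Pi.neg_apply, Int.cast_neg, neg_mul, Finset.sum_neg_distrib]

/-- `G` is the sum of the trigonometric series `∑ c i • mFourier (k i)`, whose coefficients are
nonnegative and summable. Frequencies may repeat, so that products of such sums are again indexed
by pairs. -/
structure HasNonnegTrigSum {κ : Type*} (c : κ → ℝ) (k : κ → ι → ℤ) (G : UnitAddTorus ι → ℂ) :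
    Prop where
  nonneg : ∀ i, 0 ≤ c i
  summable : Summable c
  hasSum : ∀ θ, HasSum (fun i => (c i : ℂ) * mFourier (k i) θ) (G θ)

namespace HasNonnegTrigSum

variable {κ : Type*} {c : κ → ℝ} {k : κ → ι → ℤ} {G : UnitAddTorus ι → ℂ}

lemma norm_term (hG : HasNonnegTrigSum c k G) (i : κ) (θ : UnitAddTorus ι) :
    ‖(c i : ℂ) * mFourier (k i) θ‖ = c i := by
  rw [norm_mul, norm_mFourier_apply, mul_one, norm_real, Real.norm_of_nonneg (hG.nonneg i)]

lemma norm_sq (hG : HasNonnegTrigSum c k G) :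
    HasNonnegTrigSum (fun p : κ × κ => c p.1 * c p.2) (fun p => k p.1 - k p.2)
      (fun θ => ((‖G θ‖ ^ 2 : ℝ) : ℂ)) where
  nonneg p := mul_nonneg (hG.nonneg _) (hG.nonneg _)
  summable := hG.summable.mul_of_nonneg hG.summable hG.nonneg hG.nonneg
  hasSum θ := by
    have hnorm : Summable fun i => ‖(c i : ℂ) * mFourier (k i) θ‖ := by
      simpa only [hG.norm_term] using hG.summable
    have hconj : HasSum (fun i => conj ((c i : ℂ) * mFourier (k i) θ)) (conj (G θ)) :=
      hasSum_conj'.mpr (hG.hasSum θ)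
    have hnorm' : Summable fun i => ‖conj ((c i : ℂ) * mFourier (k i) θ)‖ := by
      simpa only [RCLike.norm_conj] using hnorm
    have hpair := summable_mul_of_summable_norm hnorm hnorm'
    have hprod := (hG.hasSum θ).mul hconj hpair
    have hterm (p : κ × κ) : ((c p.1 * c p.2 : ℝ) : ℂ) * mFourier (k p.1 - k p.2) θ =
        (c p.1 : ℂ) * mFourier (k p.1) θ * conj ((c p.2 : ℂ) * mFourier (k p.2) θ) := by
      rw [map_mul, conj_ofReal, ← mFourier_neg, sub_eq_add_neg, mFourier_add]
      push_cast
      ring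
    simp only [hterm, ofReal_pow, ← mul_conj']
    exact hprod

variable [Countable κ]

lemma hasSum_integral {X : Type*} [MeasurableSpace X] {μ : Measure X} {w : X → ℂ}
    (hG : HasNonnegTrigSum c k G) (hw : Integrable w μ) {T : X → UnitAddTorus ι}
    (hT : Measurable T) :
    HasSum (fun i => (c i : ℂ) * ∫ x, w x * mFourier (k i) (T x) ∂μ) (∫ x, w x * G (T x) ∂μ) := by
  have hterm (i : κ) (x : X) : ‖w x * ((c i : ℂ) * mFourier (k i) (T x))‖ = ‖w x‖ * c i := by
    rw [norm_mul, hG.norm_term]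
  have hmeas (i : κ) :
      AEStronglyMeasurable (fun x => w x * ((c i : ℂ) * mFourier (k i) (T x))) μ :=
    hw.aestronglyMeasurable.mul
      (((mFourier (k i)).continuous.measurable.comp hT).const_mul _).aestronglyMeasurable
  have hint (i : κ) : Integrable (fun x => w x * ((c i : ℂ) * mFourier (k i) (T x))) μ :=
    (hw.norm.mul_const (c i)).mono' (hmeas i) (.of_forall fun x => (hterm i x).le)
  have hsum := hasSum_integral_of_summable_integral_norm hint (by
    simpa only [hterm, integral_mul_const] using hG.summable.mul_left _)
  have htsum (x : X) : ∑' i, w x * ((c i : ℂ) * mFourier (k i) (T x)) = w x * G (T x) :=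
    ((hG.hasSum (T x)).mul_left (w x)).tsum_eq
  simp only [htsum] at hsum
  simpa only [mul_left_comm (w _), integral_const_mul] using hsum

/-- Positivity, termwise: the frequency `0` contributes `∫ G`, the other ones are nonnegative. -/
lemma integral_le_integral_mul {n : ℕ} {k : κ → Fin n → ℤ} {G : UnitAddTorus (Fin n) → ℂ}
    (hG : HasNonnegTrigSum c k G) {h : (Fin n → ℝ) → ℂ} (hint : Integrable h)
    (hpos : ∀ ξ, 0 ≤ fourierR h ξ) (hone : fourierR h 0 = 1) :
    ∫ θ, G θ ≤ ∫ x, h x * G (toTorus x) := by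
  have htorus := hG.hasSum_integral (μ := volume) (integrable_const (1 : ℂ)) measurable_id
  have hspace := hG.hasSum_integral hint isOpenQuotientMap_toTorus.continuous.measurable
  simp only [one_mul, id, integral_mFourier] at htorus
  refine hasSum_le (fun i => ?_) htorus hspace
  have hcoeff := fourierR_intCast h (-k i)
  rw [neg_neg] at hcoeff
  rw [← hcoeff]
  refine mul_le_mul_of_nonneg_left ?_ (by exact_mod_cast hG.nonneg i)
  split_ifs with hki
  · exact le_of_eq (by simpa [hki, Pi.zero_def] using hone.symm)
  · exact hpos _

end HasNonnegTrigSum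

open scoped Convolution
open ContinuousLinearMap (lsmul)

/-- The convolution of a function `g` on the torus with a kernel `k` on the covering space
`ι → ℝ`. -/
def torusConv (k : (ι → ℝ) → ℝ) (g : UnitAddTorus ι → ℂ) (θ : UnitAddTorus ι) : ℂ :=
  ∫ y, k y • g (θ - toTorus y)

section TorusConv

variable {k : (ι → ℝ) → ℝ} {g : UnitAddTorus ι → ℂ}

lemma torusConv_comp_toTorus :
    torusConv k g ∘ toTorus = k ⋆[lsmul ℝ ℝ, volume] (g ∘ toTorus) := by
  funext x
  simp only [Function.comp_apply, torusConv, convolution_lsmul, map_sub]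

lemma continuous_torusConv (hk : Continuous k) (hsupp : HasCompactSupport k) (hg : Integrable g) :
    Continuous (torusConv k g) := by
  rw [isOpenQuotientMap_toTorus.isQuotientMap.continuous_iff, torusConv_comp_toTorus]
  exact hsupp.continuous_convolution_left _ hk (locallyIntegrable_comp_toTorus hg)

lemma integrable_smul_translate (hk : Integrable k) (hg : Integrable g) :
    Integrable (fun p : UnitAddTorus ι × (ι → ℝ) => k p.2 • g (p.1 - toTorus p.2)) := by
  have hshear : MeasurePreserving
      (fun p : (ι → ℝ) × UnitAddTorus ι => (p.1, p.2 - toTorus p.1)) :=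
    (MeasurePreserving.id volume).skew_product (g := fun y θ => θ - toTorus y)
      (measurable_snd.sub
        (isOpenQuotientMap_toTorus.continuous.measurable.comp measurable_fst))
      (.of_forall fun y => (measurePreserving_sub_right volume (toTorus y)).map_eq)
  exact (hshear.integrable_comp_of_integrable (hk.smul_prod hg)).swap

lemma mFourierCoeff_comp_sub (τ : UnitAddTorus ι) (ν : ι → ℤ) :
    mFourierCoeff (fun θ => g (θ - τ)) ν = mFourier (-ν) τ * mFourierCoeff g ν := by
  rw [mFourierCoeff, ← integral_add_right_eq_self _ τ, mFourierCoeff, ← integral_const_mul]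
  simp only [add_sub_cancel_right, mFourier_apply_add, smul_eq_mul, mul_assoc, mul_left_comm]

lemma mFourierCoeff_torusConv (hk : Integrable k) (hg : Integrable g) (ν : ι → ℤ) :
    mFourierCoeff (torusConv k g) ν =
      (∫ y, (k y : ℂ) * mFourier (-ν) (toTorus y)) * mFourierCoeff g ν := by
  have hint : Integrable fun p : UnitAddTorus ι × (ι → ℝ) =>
      mFourier (-ν) p.1 • k p.2 • g (p.1 - toTorus p.2) := by
    exact (integrable_smul_translate hk hg).bdd_smul 1
      ((mFourier (-ν)).continuous.comp continuous_fst).aestronglyMeasurable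
      (.of_forall fun p => (norm_mFourier_apply _ _).le)
  calc mFourierCoeff (torusConv k g) ν
      = ∫ θ, ∫ y, mFourier (-ν) θ • k y • g (θ - toTorus y) := by
        simp only [mFourierCoeff, torusConv, integral_smul]
    _ = ∫ y, ∫ θ, mFourier (-ν) θ • k y • g (θ - toTorus y) := integral_integral_swap hint
    _ = ∫ y, (k y : ℂ) * mFourierCoeff (fun θ => g (θ - toTorus y)) ν := by
        simp only [smul_comm (mFourier (-ν) _) (k _), integral_smul]
        rfl
    _ = _ := by
        simp only [mFourierCoeff_comp_sub, ← mul_assoc, integral_mul_const]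

lemma norm_mFourierCoeff_le (g : UnitAddTorus ι → ℂ) (ν : ι → ℤ) :
    ‖mFourierCoeff g ν‖ ≤ ∫ θ, ‖g θ‖ := by
  refine (norm_integral_le_integral_norm _).trans_eq (integral_congr_ae (.of_forall fun θ => ?_))
  simp only [norm_smul, norm_mFourier_apply, one_mul]

lemma hasNonnegTrigSum_of_mFourierCoeff {F : UnitAddTorus ι → ℂ} (hF : Continuous F)
    (hpos : ∀ ν, 0 ≤ mFourierCoeff F ν) (hsum : Summable (mFourierCoeff F)) :
    HasNonnegTrigSum (fun ν => (mFourierCoeff F ν).re) id F where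
  nonneg ν := (nonneg_iff.mp (hpos ν)).1
  summable := (Complex.hasSum_re hsum.hasSum).summable
  hasSum θ := by
    have hreal (ν : ι → ℤ) : ((mFourierCoeff F ν).re : ℂ) = mFourierCoeff F ν :=
      (eq_re_of_ofReal_le (r := 0) (hpos ν)).symm
    simp only [hreal, id]
    exact hasSum_mFourier_series_apply_of_summable (f := ⟨F, hF⟩) hsum θ

end TorusConv

lemma hasNonnegTrigSum_torusConv {n : ℕ} {k : (Fin n → ℝ) → ℝ} {g : UnitAddTorus (Fin n) → ℂ}
    (hk : Continuous k) (hsupp : HasCompactSupport k)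
    (hkpos : ∀ ξ, 0 ≤ fourierR (fun x => (k x : ℂ)) ξ)
    (hksum : Summable fun ν : Fin n → ℤ => fourierR (fun x => (k x : ℂ)) fun i => (ν i : ℝ))
    (hg : Integrable g) (hgpos : ∀ ν, 0 ≤ mFourierCoeff g ν) :
    HasNonnegTrigSum (fun ν => (mFourierCoeff (torusConv k g) ν).re) id (torusConv k g) := by
  have hcoeff (ν : Fin n → ℤ) : mFourierCoeff (torusConv k g) ν =
      fourierR (fun x => (k x : ℂ)) (fun i => (ν i : ℝ)) * mFourierCoeff g ν := by
    rw [mFourierCoeff_torusConv (hk.integrable_of_hasCompactSupport hsupp) hg, fourierR_intCast]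
  refine hasNonnegTrigSum_of_mFourierCoeff (continuous_torusConv hk hsupp hg)
    (fun ν => (hcoeff ν).symm ▸ mul_nonneg (hkpos _) (hgpos ν)) ?_
  refine .of_norm_bounded (hksum.norm.mul_right (∫ θ, ‖g θ‖)) fun ν => ?_
  rw [hcoeff, norm_mul]
  exact mul_le_mul_of_nonneg_left (norm_mFourierCoeff_le g ν) (norm_nonneg _)

lemma summable_sq_norm_mFourierCoeff {g : UnitAddTorus ι → ℂ} (hg : MemLp g 2) :
    Summable fun ν => ‖mFourierCoeff g ν‖ ^ 2 := by
  have hcoeff : mFourierCoeff (hg.toLp g) = mFourierCoeff g := funext fun ν =>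
    integral_congr_ae (hg.coeFn_toLp.mono fun θ hθ => congrArg (mFourier (-ν) θ • ·) hθ)
  exact hcoeff ▸ (hasSum_sq_mFourierCoeff (hg.toLp g)).summable

lemma summable_sq_norm_fourierR {n : ℕ} {φ : (Fin n → ℝ) → ℂ} (hφ : MemLp φ 2)
    (hsupp : Function.support φ ⊆ box n) :
    Summable fun ν : Fin n → ℤ => ‖fourierR φ fun i => (ν i : ℝ)‖ ^ 2 := by
  set a : Fin n → ℝ := fun _ => -(1 / 2)
  have hcube : MeasurableSet (cubeIoc a) := .univ_pi' fun _ => measurableSet_Ioc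
  set Φ : UnitAddTorus (Fin n) → ℂ := fun θ => φ (measurableEquivPiIoc a θ)
  have hlift : ∀ x ∈ cubeIoc a, Φ (toTorus x) = φ x := fun x hx =>
    congrArg (fun y => φ y.1) ((measurableEquivPiIoc a).apply_symm_apply ⟨x, hx⟩)
  have hmem : MemLp Φ 2 := (hφ.restrict (cubeIoc a)).comp_measurePreserving
    ((measurePreserving_subtype_coe hcube).comp (measurePreserving_equivPiIoc a))
  have hcoeff (ν : Fin n → ℤ) : mFourierCoeff Φ ν = fourierR φ fun i => (ν i : ℝ) :=
    calc mFourierCoeff Φ ν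
        = ∫ x in cubeIoc a, mFourier (-ν) (toTorus x) • Φ (toTorus x) :=
          mFourierCoeff_eq_integral Φ ν a
      _ = ∫ x in cubeIoc a, φ x * mFourier (-ν) (toTorus x) :=
          setIntegral_congr_fun hcube fun x hx => by rw [hlift x hx, smul_eq_mul, mul_comm]
      _ = ∫ x in box n, φ x * mFourier (-ν) (toTorus x) :=
          setIntegral_congr_set (cubeIoc_ae_eq_box n)
      _ = ∫ x, φ x * mFourier (-ν) (toTorus x) :=
          setIntegral_eq_integral_of_forall_compl_eq_zero fun x hx => by
            rw [Function.notMem_support.mp fun h => hx (hsupp h), zero_mul]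
      _ = fourierR φ fun i => (ν i : ℝ) := (fourierR_intCast φ ν).symm
  simpa only [hcoeff] using summable_sq_norm_mFourierCoeff hmem

lemma hasNonnegTrigSum_torusConv_bumpKernel {n : ℕ} {φ : ContDiffBump (0 : Fin n → ℝ)}
    (hφ : φ.rOut ≤ 1 / 2) {g : UnitAddTorus (Fin n) → ℂ} (hg : Integrable g)
    (hgpos : ∀ ν, 0 ≤ mFourierCoeff g ν) :
    HasNonnegTrigSum (fun ν => (mFourierCoeff (torusConv (bumpKernel volume φ) g) ν).re) id
      (torusConv (bumpKernel volume φ) g) := by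
  have hbox : Function.support (fun x => (φ.normed volume x : ℂ)) ⊆ box n := fun x hx => by
    have hball : x ∈ Metric.ball 0 φ.rOut := by
      rw [← φ.support_normed_eq (μ := volume)]
      exact fun h => hx (by simp only [h, ofReal_zero])
    have hcoord (i : Fin n) : |x i| ≤ 1 / 2 :=
      (norm_le_pi_norm x i).trans ((mem_ball_zero_iff.mp hball).le.trans hφ)
    exact ⟨fun i => (abs_le.mp (hcoord i)).1, fun i => (abs_le.mp (hcoord i)).2⟩
  have hmem : MemLp (fun x => (φ.normed volume x : ℂ)) 2 :=
    (φ.continuous_normed.memLp_of_hasCompactSupport φ.hasCompactSupport_normed).ofReal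
  refine hasNonnegTrigSum_torusConv (continuous_bumpKernel φ) (hasCompactSupport_bumpKernel φ)
    (fourierR_bumpKernel_nonneg φ) ?_ hg hgpos
  simp only [fourierR_bumpKernel]
  exact_mod_cast summable_sq_norm_fourierR hmem hbox

lemma HasNonnegTrigSum.continuous {κ : Type*} {c : κ → ℝ} {k : κ → ι → ℤ}
    {G : UnitAddTorus ι → ℂ} (hG : HasNonnegTrigSum c k G) : Continuous G := by
  have hsum : G = fun θ => ∑' i, (c i : ℂ) * mFourier (k i) θ :=
    funext fun θ => (hG.hasSum θ).tsum_eq.symm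
  rw [hsum]
  exact continuous_tsum (fun i => by fun_prop) hG.summable fun i θ => (hG.norm_term i θ).le

lemma integrable_mul_comp_toTorus {w : (ι → ℝ) → ℂ} (hw : Integrable w)
    {F : UnitAddTorus ι → ℂ} (hF : Continuous F) : Integrable fun x => w x * F (toTorus x) := by
  obtain ⟨C, hC⟩ := isCompact_univ.exists_bound_of_continuousOn hF.continuousOn
  exact hw.mul_bdd (c := C)
    (hF.comp isOpenQuotientMap_toTorus.continuous).aestronglyMeasurable
    (.of_forall fun x => hC _ (mem_univ _))

lemma AdmDel.lintegral_norm_sq_le {n : ℕ} {D : Set (Fin n → ℝ)} {h : (Fin n → ℝ) → ℂ}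
    (hh : AdmDel D h) {κ : Type*} [Countable κ] {c : κ → ℝ}
    {k : κ → Fin n → ℤ} {G : UnitAddTorus (Fin n) → ℂ} (hG : HasNonnegTrigSum c k G) :
    ∫⁻ θ, ‖G θ‖ₑ ^ 2 ≤ ENNReal.ofReal (h 0).re * ∫⁻ x in D, ‖G (toTorus x)‖ₑ ^ 2 := by
  obtain ⟨-, hint, hpos, hneg, hone⟩ := id hh
  have hcont : Continuous fun θ => ‖G θ‖ ^ 2 := hG.continuous.norm.pow 2
  have hweighted : Integrable fun x => h x * ((‖G (toTorus x)‖ ^ 2 : ℝ) : ℂ) :=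
    integrable_mul_comp_toTorus hint (continuous_ofReal.comp hcont)
  have hle : ∫ θ, ‖G θ‖ ^ 2 ≤ ∫ x, (h x).re * ‖G (toTorus x)‖ ^ 2 := by
    have hre := (le_def.mp (hG.norm_sq.integral_le_integral_mul hint hpos hone)).1
    rw [integral_complex_ofReal, ofReal_re, ← RCLike.re_eq_complex_re,
      ← integral_re hweighted] at hre
    simpa only [RCLike.re_eq_complex_re, re_mul_ofReal] using hre
  have hsq (θ : UnitAddTorus (Fin n)) : ENNReal.ofReal (‖G θ‖ ^ 2) = ‖G θ‖ₑ ^ 2 := by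
    rw [ENNReal.ofReal_pow (norm_nonneg _), ofReal_norm]
  calc ∫⁻ θ, ‖G θ‖ₑ ^ 2
      = ENNReal.ofReal (∫ θ, ‖G θ‖ ^ 2) := by
        rw [ofReal_integral_eq_lintegral_ofReal
          (hcont.integrable_of_hasCompactSupport (.of_compactSpace _))
          (.of_forall fun θ => sq_nonneg _)]
        simp only [hsq]
    _ ≤ ∫⁻ x, ENNReal.ofReal ((h x).re * ‖G (toTorus x)‖ ^ 2) := by
        refine (ENNReal.ofReal_le_ofReal hle).trans (ofReal_integral_le_lintegral_ofReal ?_)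
        simpa only [RCLike.re_eq_complex_re, re_mul_ofReal] using hweighted.re
    _ = ∫⁻ x, ENNReal.ofReal (h x).re * ‖G (toTorus x)‖ₑ ^ 2 := by
        simp only [ENNReal.ofReal_mul' (sq_nonneg _), hsq]
    _ = ∫⁻ x in D, ENNReal.ofReal (h x).re * ‖G (toTorus x)‖ₑ ^ 2 := by
        refine (setLIntegral_eq_of_support_subset fun x hx => ?_).symm
        by_contra hxD
        exact hx (by simp only [ENNReal.ofReal_of_nonpos (le_def.mp (hneg x hxD)).1, zero_mul])
    _ ≤ ∫⁻ x in D, ENNReal.ofReal (h 0).re * ‖G (toTorus x)‖ₑ ^ 2 := by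
        refine lintegral_mono fun x => mul_le_mul' (ENNReal.ofReal_le_ofReal ?_) le_rfl
        exact (re_le_norm _).trans (hh.norm_le x)
    _ = _ := lintegral_const_mul' _ _ ENNReal.ofReal_ne_top

variable {n : ℕ} {D : Set (Fin n → ℝ)} {h : (Fin n → ℝ) → ℂ} {g : UnitAddTorus (Fin n) → ℂ}

lemma AdmDel.setLIntegral_convolution_bumpKernel_le {S : Set (Fin n → ℝ)} (hh : AdmDel S h)
    (hg : Integrable g) (hgpos : ∀ ν, 0 ≤ mFourierCoeff g ν) {φ : ContDiffBump (0 : Fin n → ℝ)}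
    (hφ : φ.rOut ≤ 1 / 2) (hSD : S - Metric.closedBall 0 (2 * φ.rOut) ⊆ D) :
    ∫⁻ x in box n, ‖(bumpKernel volume φ ⋆[lsmul ℝ ℝ, volume] (g ∘ toTorus)) x‖ₑ ^ 2 ≤
      ENNReal.ofReal (h 0).re * ∫⁻ x in D, ‖g (toTorus x)‖ₑ ^ 2 := by
  have hcontract := setLIntegral_enorm_convolution_sq_le (F := ℂ)
    (continuous_bumpKernel (μ := volume) φ).aestronglyMeasurable
    (locallyIntegrable_comp_toTorus hg).aestronglyMeasurable
    ((sub_subset_sub_left (support_bumpKernel_subset φ)).trans hSD)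
  rw [lintegral_enorm_bumpKernel, one_pow, one_mul] at hcontract
  rw [← torusConv_comp_toTorus] at hcontract ⊢
  exact (setLIntegral_box_comp_toTorus fun θ => ‖torusConv (bumpKernel volume φ) g θ‖ₑ ^ 2).trans_le
    ((hh.lintegral_norm_sq_le (hasNonnegTrigSum_torusConv_bumpKernel hφ hg hgpos)).trans
      (mul_le_mul' le_rfl hcontract))

open Filter Topology

lemma AdmDel.setLIntegral_box_norm_sq_le (hh : AdmDel D h) (hconv : Convex ℝ D)
    (hzero : D ∈ 𝓝 0) (hg : Integrable g) (hgpos : ∀ ν, 0 ≤ mFourierCoeff g ν) :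
    ∫⁻ x in box n, ‖g (toTorus x)‖ₑ ^ 2 ≤
      ENNReal.ofReal (h 0).re * ∫⁻ x in D, ‖g (toTorus x)‖ₑ ^ 2 := by
  obtain ⟨s, φ, hs, hs_lim, hφ_lim, hφ_ratio, hφ_small, hφ_sub⟩ :=
    exists_bumps_of_convex hconv hzero
  have hloc := locallyIntegrable_comp_toTorus hg
  have hcont (j : ℕ) :
      Continuous (bumpKernel volume (φ j) ⋆[lsmul ℝ ℝ, volume] (g ∘ toTorus)) :=
    (hasCompactSupport_bumpKernel (φ j)).continuous_convolution_left _
      (continuous_bumpKernel (φ j)) hloc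
  have happrox := ae_tendsto_convolution_bumpKernel hφ_lim (.of_forall hφ_ratio) hloc
  have hdilation := (hs_lim.pow n).inv₀ (pow_ne_zero n one_ne_zero)
  simp only [one_pow, inv_one] at hdilation
  refine lintegral_le_of_ae_tendsto
    (fun j => ((hcont j).measurable.enorm.pow_const 2).aemeasurable)
    ((ae_restrict_of_ae happrox).mono fun x hx =>
      ((ENNReal.continuous_pow 2).tendsto _).comp hx.enorm)
    (fun j => (hh.dilation (hs j)).setLIntegral_convolution_bumpKernel_le hg hgpos (hφ_small j)
      (hφ_sub j)) ?_
  refine ENNReal.Tendsto.mul_const (ENNReal.tendsto_ofReal ?_)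
    (.inl (ENNReal.ofReal_pos.mpr hh.re_pos).ne')
  simpa only [smul_zero, re_ofReal_mul, one_mul] using hdilation.mul_const (h 0).re

end Torus

section WienerConstant

variable {n : ℕ} {D : Set (Fin n → ℝ)}

/-- `C` is a constant in Wiener's inequality for `D`; `Wconst n D` is the infimum of these. -/
def IsWienerBound (D : Set (Fin n → ℝ)) (C : ℝ) : Prop :=
  ∀ f : (Fin n → ℝ) → ℂ, IsPeriodic f → IntegrableOn f (box n) → (∀ ν, 0 ≤ fourierCoeffT f ν) →
    ∫⁻ x in box n, ‖f x‖ₑ ^ 2 ≤ ENNReal.ofReal C * (volume D)⁻¹ * ∫⁻ x in D, ‖f x‖ₑ ^ 2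

lemma IsWienerBound.nonneg {C : ℝ} (hC : IsWienerBound D C) : 0 ≤ C := by
  have hcoeff (ν : Fin n → ℤ) : 0 ≤ fourierCoeffT (fun _ => 1) ν := by
    rw [fourierCoeffT_one]
    split_ifs
    exacts [zero_le_one, le_rfl]
  by_contra! hneg
  have hle := hC (fun _ => 1) (fun _ _ => rfl)
    (integrableOn_const isCompact_Icc.measure_ne_top) hcoeff
  rw [ENNReal.ofReal_of_nonpos hneg.le] at hle
  norm_num [box, Real.volume_Icc_pi] at hle

lemma IsWienerBound.Wconst_le {C : ℝ} (hC : IsWienerBound D C) : Wconst n D ≤ C :=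
  csInf_le ⟨0, fun _ => IsWienerBound.nonneg⟩ hC

lemma AdmDel.isWienerBound {h : (Fin n → ℝ) → ℂ} (hh : AdmDel D h) (hconv : Convex ℝ D)
    (hzero : D ∈ nhds 0) (hfin : volume D ≠ ∞) :
    IsWienerBound D ((volume D).toReal * (h 0).re) := by
  intro f hf hint hpos
  obtain ⟨g, rfl⟩ := hf.exists_eq_comp_toTorus
  have hcancel : ENNReal.ofReal ((volume D).toReal * (h 0).re) * (volume D)⁻¹ =
      ENNReal.ofReal (h 0).re := by
    rw [ENNReal.ofReal_mul ENNReal.toReal_nonneg, ENNReal.ofReal_toReal hfin, mul_comm,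
      ENNReal.inv_mul_cancel_left (Measure.measure_pos_of_mem_nhds volume hzero).ne' hfin]
  rw [hcancel]
  exact hh.setLIntegral_box_norm_sq_le hconv hzero ((integrableOn_box_comp_toTorus g).mp hint)
    fun ν => fourierCoeffT_comp_toTorus g ν ▸ hpos ν

theorem wiener_le_delsarte_general (hconv : Convex ℝ D) (hzero : D ∈ nhds 0)
    (hfin : volume D ≠ ∞) : Wconst n D ≤ (volume D).toReal * ADel n D := by
  have hvol : 0 < (volume D).toReal :=
    ENNReal.toReal_pos (Measure.measure_pos_of_mem_nhds volume hzero).ne' hfin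
  obtain ⟨h₀, hh₀⟩ := exists_admDel hzero
  rw [← div_le_iff₀' hvol]
  refine le_csInf ⟨_, h₀, hh₀, rfl⟩ ?_
  rintro _ ⟨h, hh, rfl⟩
  exact (div_le_iff₀' hvol).mpr (hh.isWienerBound hconv hzero hfin).Wconst_le

end WienerConstant

/-- Wiener–Delsarte bound: `W_n(D) ≤ |D| · A_{ℝⁿ}(D)` for an origin-symmetric convex
body `D` in the torus. -/
theorem wiener_le_delsarte (n : ℕ) (D : Set (Fin n → ℝ)) (hD : D ⊆ box n)
    (hconv : Convex ℝ D) (hcomp : IsCompact D) (hsym : ∀ x ∈ D, -x ∈ D)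
    (hint : (interior D).Nonempty) :
    Wconst n D ≤ (volume D).toReal * ADel n D :=
  wiener_le_delsarte_general hconv
    (mem_nhds_zero_of_convex_of_symmetric hconv hsym hint) hcomp.measure_lt_top.ne
end
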